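/- For each integer m > 5/2 (i.e. m ≥ 3) there is a constant C such that for all f, g in appropriate Sobolev spaces on ℝ³: Σ_{|α| ≤ m} ‖D^α(fg) − (D^α f) g‖_{L²} ≤ C (‖f‖_{H^{m−1}} ‖∇g‖_{L^∞} + ‖f‖_{L^∞} ‖g‖_{H^m}). -/

import Mathlib

open MeasureTheory

/-- Partial derivative `∂ᵢ f` of a scalar function on `ℝ³`. -/
noncomputable def pd (i : Fin 3) (f : (Fin 3 → ℝ) → ℝ) : (Fin 3 → ℝ) → ℝ :=
  fun x => fderiv ℝ f x (Pi.single i 1)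

/-- Multi-index derivative `D^α` with `α = (a, b, c)`. -/
noncomputable def Dmulti (a b c : ℕ) (f : (Fin 3 → ℝ) → ℝ) : (Fin 3 → ℝ) → ℝ :=
  (pd 0)^[a] ((pd 1)^[b] ((pd 2)^[c] f))

/-- Squared Sobolev `H^m` norm. -/
noncomputable def sobSq (m : ℕ) (f : (Fin 3 → ℝ) → ℝ) : ℝ :=
  ∑ k ∈ Finset.range (m + 1), ∫ x : Fin 3 → ℝ, ‖iteratedFDeriv ℝ k f x‖ ^ 2

/-- Sobolev `H^m` norm. -/
noncomputable def sob (m : ℕ) (f : (Fin 3 → ℝ) → ℝ) : ℝ := Real.sqrt (sobSq m f)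

/-- `L²` norm. -/
noncomputable def l2 (f : (Fin 3 → ℝ) → ℝ) : ℝ := Real.sqrt (∫ x : Fin 3 → ℝ, f x ^ 2)

/-- `L^∞` norm. -/
noncomputable def linf (f : (Fin 3 → ℝ) → ℝ) : ℝ := (eLpNorm f ⊤ volume).toReal

/-- `L^∞` norm of the gradient. -/
noncomputable def gradLinf (f : (Fin 3 → ℝ) → ℝ) : ℝ :=
  (eLpNorm (fun x => ‖fderiv ℝ f x‖) ⊤ volume).toReal

/-- Multi-indices `α ∈ ℕ³` with `|α| ≤ m`. -/
def idxSet (m : ℕ) : Finset (ℕ × ℕ × ℕ) :=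
  (Finset.range (m + 1) ×ˢ Finset.range (m + 1) ×ˢ Finset.range (m + 1)).filter
    (fun p => p.1 + p.2.1 + p.2.2 ≤ m)

/-!
By the Leibniz rule, `D^α (f g) - (D^α f) g` is a sum of products `D^β f · D^γ g` with `γ ≠ 0`, so
one derivative can be moved onto `g` beforehand and it remains to bound `D^β f · D^γ h` in `L²`,
where `h` is a first derivative of `g` and `|β| + |γ| = n < m`. Integrating `|∂v|^p` by parts gives
the Gagliardo–Nirenberg inequality `‖∂v‖_p² ≤ (p - 1) ‖v‖_q ‖∂²v‖_r` for `2/p = 1/q + 1/r`. Hence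
the suprema of the `L^{2n/j}` norms of the derivatives of order `j` form a log-convex sequence in
`j`, up to constants, and Hölder's inequality followed by interpolation bounds every product by the
endpoint quantities `‖f‖_∞ ‖h‖_{H^n}` and `‖f‖_{H^n} ‖h‖_∞`.
-/

open scoped SchwartzMap LineDeriv ENNReal

theorem holderTriple_div {a b c : ℝ≥0∞} (ha : a ≠ 0) (ha' : a ≠ ∞) :
    ENNReal.HolderTriple (a / b) (a / c) (a / (b + c)) :=
  ⟨by simp only [ENNReal.inv_div (.inr ha') (.inr ha), ENNReal.div_add_div_same]⟩

section LpNorm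

variable {α : Type*} [MeasurableSpace α] {μ : Measure α}

theorem lpNorm_smul_le {𝕜 E : Type*} [NormedRing 𝕜] [NormedAddCommGroup E] [MulActionWithZero 𝕜 E]
    [IsBoundedSMul 𝕜 E] {f : α → 𝕜} {g : α → E} {p q r : ℝ≥0∞} [ENNReal.HolderTriple p q r]
    (hf : MemLp f p μ) (hg : MemLp g q μ) :
    lpNorm (f • g) r μ ≤ lpNorm f p μ * lpNorm g q μ := by
  rw [← toReal_eLpNorm hf.1, ← toReal_eLpNorm hg.1, ← toReal_eLpNorm (hf.1.smul hg.1),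
    ← ENNReal.toReal_mul]
  exact ENNReal.toReal_mono (ENNReal.mul_ne_top hf.2.ne hg.2.ne)
    (eLpNorm_smul_le_mul_eLpNorm hg.1 hf.1)

variable {E : Type*} [NormedAddCommGroup E]

theorem lpNorm_rpow_toReal_eq_integral {f : α → E} {p : ℝ≥0∞} (hp₀ : p ≠ 0) (hp : p ≠ ∞)
    (hf : AEStronglyMeasurable f μ) :
    lpNorm f p μ ^ p.toReal = ∫ x, ‖f x‖ ^ p.toReal ∂μ := by
  rw [lpNorm_eq_integral_norm_rpow_toReal hp₀ hp hf,
    Real.rpow_inv_rpow (by positivity) (ENNReal.toReal_ne_zero.2 ⟨hp₀, hp⟩)]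

theorem memLp_norm_rpow {f : α → E} {p : ℝ≥0∞} {s : ℝ} (hs : 0 < s)
    (hf : MemLp f (p * ENNReal.ofReal s) μ) : MemLp (fun x ↦ ‖f x‖ ^ s) p μ := by
  refine ⟨(hf.1.norm.aemeasurable.pow_const s).aestronglyMeasurable, ?_⟩
  rw [eLpNorm_norm_rpow f hs]
  exact ENNReal.rpow_lt_top_of_nonneg hs.le hf.2.ne

theorem lpNorm_norm_rpow {f : α → E} {p : ℝ≥0∞} {s : ℝ} (hs : 0 < s)
    (hf : MemLp f (p * ENNReal.ofReal s) μ) :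
    lpNorm (fun x ↦ ‖f x‖ ^ s) p μ = lpNorm f (p * ENNReal.ofReal s) μ ^ s := by
  rw [← toReal_eLpNorm (memLp_norm_rpow hs hf).1, ← toReal_eLpNorm hf.1, ENNReal.toReal_rpow,
    eLpNorm_norm_rpow f hs]

theorem integral_norm_mul_norm_rpow_le {F : Type*} [NormedAddCommGroup F] {f : α → E} {g : α → F}
    {p : ℝ≥0∞} (hp : 2 < p) (hp' : p ≠ ∞) (hf : MemLp f (p / 2) μ) (hg : MemLp g p μ) :
    ∫ x, ‖f x‖ * ‖g x‖ ^ (p.toReal - 2) ∂μ ≤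
      lpNorm f (p / 2) μ * lpNorm g p μ ^ (p.toReal - 2) := by
  have hs : 0 < p.toReal - 2 := by
    simpa using (ENNReal.toReal_lt_toReal ENNReal.ofNat_ne_top hp').2 hp
  have hofReal : ENNReal.ofReal (p.toReal - 2) = p - 2 := by
    rw [ENNReal.ofReal_sub _ zero_le_two, ENNReal.ofReal_toReal hp', ENNReal.ofReal_ofNat]
  have hp2 : p - 2 ≠ 0 := (tsub_pos_of_lt hp).ne'
  have hp2' : p - 2 ≠ ∞ := ENNReal.sub_ne_top hp'
  have hp0 : p ≠ 0 := (zero_le.trans_lt hp).ne'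
  have hexp : p / (p - 2) * ENNReal.ofReal (p.toReal - 2) = p := by
    rw [hofReal, ENNReal.div_mul_cancel hp2 hp2']
  have : ENNReal.HolderTriple (p / 2) (p / (p - 2)) 1 := by
    simpa only [add_tsub_cancel_of_le hp.le, ENNReal.div_self hp0 hp'] using
      holderTriple_div (b := 2) (c := p - 2) hp0 hp'
  rw [← hexp] at hg
  calc ∫ x, ‖f x‖ * ‖g x‖ ^ (p.toReal - 2) ∂μ
      = lpNorm ((fun x ↦ ‖f x‖) • fun x ↦ ‖g x‖ ^ (p.toReal - 2)) 1 μ := by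
        rw [lpNorm_one_eq_integral_norm (hf.1.norm.smul (memLp_norm_rpow hs hg).1)]
        simp [abs_of_nonneg, Real.rpow_nonneg]
    _ ≤ lpNorm (fun x ↦ ‖f x‖) (p / 2) μ *
        lpNorm (fun x ↦ ‖g x‖ ^ (p.toReal - 2)) (p / (p - 2)) μ :=
        lpNorm_smul_le hf.norm (memLp_norm_rpow hs hg)
    _ = lpNorm f (p / 2) μ * lpNorm g p μ ^ (p.toReal - 2) := by
        rw [lpNorm_norm_rpow hs hg, hexp, lpNorm_norm hf.1]

end LpNorm

theorem hasDerivAt_abs_rpow_mul_self {s : ℝ} (hs : 0 < s) (t : ℝ) :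
    HasDerivAt (fun t : ℝ ↦ |t| ^ s * t) ((s + 1) * |t| ^ s) t := by
  have hcont : Continuous fun t : ℝ ↦ |t| ^ s := continuous_abs.rpow_const fun _ ↦ .inr hs.le
  refine hasDerivAt_of_hasDerivAt_of_ne' (x := 0) (fun u hu ↦ ?_)
    (hcont.mul continuous_id).continuousAt (continuous_const.mul hcont).continuousAt t
  have hu' : |u| ≠ 0 := abs_ne_zero.2 hu
  convert! ((hasDerivAt_abs hu).rpow_const (p := s) (.inl hu')).mul (hasDerivAt_id u) using 1
  calc (s + 1) * |u| ^ s = |u| ^ s / |u| * (SignType.sign u * u) * s + |u| ^ s := by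
        rw [sign_mul_self, div_mul_cancel₀ _ hu']
        ring
    _ = _ := by
        rw [Real.rpow_sub_one hu', id]
        ring

section GagliardoNirenberg

variable {E : Type*} [NormedAddCommGroup E] [NormedSpace ℝ E] [FiniteDimensional ℝ E]
  [MeasurableSpace E] [BorelSpace E] {μ : Measure E} [μ.IsAddHaarMeasure]

theorem integrable_mul_mul_abs_rpow (f g z : 𝓢(E, ℝ)) {s : ℝ} (hs : 0 ≤ s) :
    Integrable (fun x ↦ f x * g x * |z x| ^ s) μ := by
  obtain ⟨C, -, hC⟩ := z.decay 0 0
  refine (MemLp.integrable_mul (f.memLp 2 μ) (g.memLp 2 μ)).mul_bdd (c := C ^ s)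
    ((continuous_abs.comp z.continuous).rpow_const fun _ ↦ .inr hs).aestronglyMeasurable
    (ae_of_all _ fun x ↦ ?_)
  rw [Real.norm_of_nonneg (by positivity)]
  gcongr
  simpa using hC x

/- `|z|^(s+2) = ∂v · |z|^s z`, and integrating by parts moves the derivative onto `|z|^s z`. -/
theorem integral_abs_lineDerivOp_rpow_le (v : 𝓢(E, ℝ)) (e : E) {s : ℝ} (hs : 0 < s) :
    ∫ x, |∂_{e} v x| ^ (s + 2) ∂μ ≤
      (s + 1) * ∫ x, |v x * ∂_{e} (∂_{e} v) x| * |∂_{e} v x| ^ s ∂μ := by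
  set z := ∂_{e} v with hz
  have hderiv (x : E) : HasFDerivAt (fun x ↦ |z x| ^ s * z x)
      (((s + 1) * |z x| ^ s) • fderiv ℝ z x) x :=
    (hasDerivAt_abs_rpow_mul_self hs (z x)).comp_hasFDerivAt x (z.hasFDerivAt x)
  have hfderiv (x : E) :
      v x * fderiv ℝ (fun x ↦ |z x| ^ s * z x) x e = (s + 1) * (v x * ∂_{e} z x * |z x| ^ s) := by
    rw [(hderiv x).fderiv, smul_apply, smul_eq_mul, SchwartzMap.lineDerivOp_apply_eq_fderiv e z x]
    ring
  have hparts : ∫ x, v x * fderiv ℝ (fun x ↦ |z x| ^ s * z x) x e ∂μ =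
      -∫ x, fderiv ℝ v x e * (|z x| ^ s * z x) ∂μ := by
    refine integral_mul_fderiv_eq_neg_fderiv_mul_of_integrable ?_ ?_ ?_
      (fun x _ ↦ v.differentiableAt) (fun x _ ↦ (hderiv x).differentiableAt)
    · exact (integrable_mul_mul_abs_rpow z z z hs.le).congr (ae_of_all _ fun x ↦ by
        simp only [hz, SchwartzMap.lineDerivOp_apply_eq_fderiv]; ring)
    · simpa only [hfderiv] using (integrable_mul_mul_abs_rpow v (∂_{e} z) z hs.le).const_mul (s + 1)
    · exact (integrable_mul_mul_abs_rpow v z z hs.le).congr (ae_of_all _ fun x ↦ by ring)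
  calc ∫ x, |z x| ^ (s + 2) ∂μ = ∫ x, fderiv ℝ v x e * (|z x| ^ s * z x) ∂μ := by
        congr 1 with x
        rw [← SchwartzMap.lineDerivOp_apply_eq_fderiv, ← hz,
          Real.rpow_add_of_nonneg (abs_nonneg _) hs.le zero_le_two, Real.rpow_two, sq_abs]
        ring
    _ = (s + 1) * -∫ x, v x * ∂_{e} z x * |z x| ^ s ∂μ := by
        rw [← neg_eq_iff_eq_neg.2 hparts]
        simp only [hfderiv, integral_const_mul, mul_neg]
    _ ≤ (s + 1) * ∫ x, |v x * ∂_{e} z x * |z x| ^ s| ∂μ := by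
        gcongr
        exact (neg_le_abs _).trans abs_integral_le_integral_abs
    _ = (s + 1) * ∫ x, |v x * ∂_{e} z x| * |z x| ^ s ∂μ := by
        simp only [abs_mul, abs_of_nonneg (Real.rpow_nonneg (abs_nonneg _) s)]

theorem lpNorm_lineDerivOp_sq_le (v : 𝓢(E, ℝ)) (e : E) {p q r : ℝ≥0∞} (hp : 2 < p) (hp' : p ≠ ∞)
    [ENNReal.HolderTriple q r (p / 2)] :
    lpNorm (∂_{e} v : 𝓢(E, ℝ)) p μ ^ 2 ≤
      (p.toReal - 1) * (lpNorm v q μ * lpNorm (∂_{e} (∂_{e} v) : 𝓢(E, ℝ)) r μ) := by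
  set z := ∂_{e} v
  set A := lpNorm z p μ
  set B := lpNorm v q μ * lpNorm (∂_{e} z : 𝓢(E, ℝ)) r μ
  have hs : 0 < p.toReal - 2 := by
    simpa using (ENNReal.toReal_lt_toReal ENNReal.ofNat_ne_top hp').2 hp
  have hA : 0 ≤ A := lpNorm_nonneg
  have hB : 0 ≤ B := mul_nonneg lpNorm_nonneg lpNorm_nonneg
  rcases hA.eq_or_lt with hA | hA
  · rw [← hA, zero_pow two_ne_zero]
    exact mul_nonneg (by linarith) hB
  have hvw : MemLp (⇑v • ⇑(∂_{e} z : 𝓢(E, ℝ))) (p / 2) μ :=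
    ((∂_{e} z : 𝓢(E, ℝ)).memLp r μ).smul (v.memLp q μ)
  refine le_of_mul_le_mul_right ?_ (Real.rpow_pos_of_pos hA (p.toReal - 2))
  calc A ^ 2 * A ^ (p.toReal - 2) = A ^ p.toReal := by
        rw [← Real.rpow_natCast, ← Real.rpow_add hA, Nat.cast_ofNat, add_sub_cancel]
    _ = ∫ x, |z x| ^ (p.toReal - 2 + 2) ∂μ := by
        rw [sub_add_cancel, lpNorm_rpow_toReal_eq_integral (zero_le.trans_lt hp).ne' hp'
          z.continuous.aestronglyMeasurable]
        rfl
    _ ≤ (p.toReal - 2 + 1) * ∫ x, |v x * ∂_{e} z x| * |z x| ^ (p.toReal - 2) ∂μ :=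
        integral_abs_lineDerivOp_rpow_le v e hs
    _ ≤ (p.toReal - 2 + 1) * (B * A ^ (p.toReal - 2)) := by
        gcongr
        refine (integral_norm_mul_norm_rpow_le hp hp' hvw (z.memLp p μ)).trans ?_
        gcongr
        exact lpNorm_smul_le (v.memLp q μ) ((∂_{e} z : 𝓢(E, ℝ)).memLp r μ)
    _ = (p.toReal - 1) * B * A ^ (p.toReal - 2) := by ring

end GagliardoNirenberg

section LogConvex

theorem le_max_endpoints_of_sq_le_mul {d : ℕ → ℝ} {n : ℕ} (hd : ∀ i, 0 ≤ d i)
    (h : ∀ i, i + 2 ≤ n → d (i + 1) ^ 2 ≤ d i * d (i + 2)) {i : ℕ} (hi : i ≤ n) :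
    d i ≤ max (d 0) (d n) := by
  induction n generalizing i with
  | zero => simp [Nat.le_zero.1 hi]
  | succ k ih =>
    have hk (j : ℕ) (hj : j ≤ k) : d j ≤ max (d 0) (d k) := ih (fun l hl ↦ h l (by lia)) hj
    suffices d k ≤ max (d 0) (d (k + 1)) by
      rcases hi.eq_or_lt with rfl | hi
      · exact le_max_right _ _
      · exact (hk i (by lia)).trans (max_le (le_max_left _ _) this)
    rcases le_total (d k) (d 0) with hle | hge
    · exact hle.trans (le_max_left _ _)
    rcases k with _ | l
    · exact le_max_left _ _
    rcases (hd (l + 1)).eq_or_lt with hzero | hpos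
    · exact hzero ▸ (hd _).trans (le_max_right _ _)
    have hl : d l ≤ d (l + 1) := (hk l l.le_succ).trans_eq (max_eq_right hge)
    refine le_max_of_le_right (le_of_mul_le_mul_left ?_ hpos)
    calc d (l + 1) * d (l + 1) = d (l + 1) ^ 2 := (sq _).symm
      _ ≤ d l * d (l + 2) := h l le_rfl
      _ ≤ d (l + 1) * d (l + 2) := by gcongr; exact hd _

/- The weight `K ^ i ^ 2` absorbs the constants because
`2 (i + 1) ^ 2 + 2 = i ^ 2 + (i + 2) ^ 2`. -/
theorem weighted_mul_sq_le_mul {a b : ℕ → ℝ} {n : ℕ} {K : ℝ} (hK : 0 ≤ K) (ha : ∀ i, 0 ≤ a i)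
    (ha' : ∀ i, i + 2 ≤ n → a (i + 1) ^ 2 ≤ K * (a i * a (i + 2)))
    (hb' : ∀ i, i + 2 ≤ n → b (i + 1) ^ 2 ≤ K * (b i * b (i + 2))) {i : ℕ} (hi : i + 2 ≤ n) :
    (K ^ (i + 1) ^ 2 * (a (i + 1) * b (n - (i + 1)))) ^ 2 ≤
      K ^ i ^ 2 * (a i * b (n - i)) * (K ^ (i + 2) ^ 2 * (a (i + 2) * b (n - (i + 2)))) := by
  obtain ⟨l, rfl⟩ := Nat.exists_eq_add_of_le hi
  rw [show i + 2 + l - i = l + 2 by lia, show i + 2 + l - (i + 1) = l + 1 by lia,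
    show i + 2 + l - (i + 2) = l by lia]
  have haa : 0 ≤ K * (a i * a (i + 2)) := mul_nonneg hK (mul_nonneg (ha i) (ha (i + 2)))
  calc (K ^ (i + 1) ^ 2 * (a (i + 1) * b (l + 1))) ^ 2
      = (K ^ (i + 1) ^ 2) ^ 2 * (a (i + 1) ^ 2 * b (l + 1) ^ 2) := by ring
    _ ≤ (K ^ (i + 1) ^ 2) ^ 2 * (K * (a i * a (i + 2)) * (K * (b l * b (l + 2)))) := by
        gcongr
        · exact ha' i hi
        · exact hb' l (by lia)
    _ = K ^ i ^ 2 * (a i * b (l + 2)) * (K ^ (i + 2) ^ 2 * (a (i + 2) * b l)) := by ring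

theorem mul_le_of_sq_le_mul {a b : ℕ → ℝ} {n : ℕ} {K : ℝ} (hK : 1 ≤ K)
    (ha : ∀ i, 0 ≤ a i) (hb : ∀ i, 0 ≤ b i)
    (ha' : ∀ i, i + 2 ≤ n → a (i + 1) ^ 2 ≤ K * (a i * a (i + 2)))
    (hb' : ∀ i, i + 2 ≤ n → b (i + 1) ^ 2 ≤ K * (b i * b (i + 2)))
    {i j : ℕ} (hij : i + j = n) :
    a i * b j ≤ K ^ n ^ 2 * (a 0 * b n + a n * b 0) := by
  have hK0 : 0 ≤ K := zero_le_one.trans hK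
  have hab (i j : ℕ) : 0 ≤ a i * b j := mul_nonneg (ha i) (hb j)
  calc a i * b j = a i * b (n - i) := by rw [← hij, Nat.add_sub_cancel_left]
    _ ≤ K ^ i ^ 2 * (a i * b (n - i)) := le_mul_of_one_le_left (hab _ _) (one_le_pow₀ hK)
    _ ≤ max (K ^ 0 ^ 2 * (a 0 * b (n - 0))) (K ^ n ^ 2 * (a n * b (n - n))) :=
        le_max_endpoints_of_sq_le_mul (d := fun i ↦ K ^ i ^ 2 * (a i * b (n - i)))
          (fun i ↦ mul_nonneg (by positivity) (hab _ _))
          (fun i hi ↦ weighted_mul_sq_le_mul hK0 ha ha' hb' hi) (by lia)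
    _ ≤ max (K ^ n ^ 2 * (a 0 * b n)) (K ^ n ^ 2 * (a n * b 0)) := by
        rw [Nat.sub_zero, Nat.sub_self]
        gcongr
        exacts [hab _ _, Nat.zero_le n]
    _ ≤ K ^ n ^ 2 * (a 0 * b n) + K ^ n ^ 2 * (a n * b 0) :=
        max_le_add_of_nonneg (mul_nonneg (by positivity) (hab _ _))
          (mul_nonneg (by positivity) (hab _ _))
    _ = K ^ n ^ 2 * (a 0 * b n + a n * b 0) := (mul_add _ _ _).symm

end LogConvex

section MixedDeriv

variable {E F G H ι : Type*} [NormedAddCommGroup E] [NormedSpace ℝ E]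
  [NormedAddCommGroup F] [NormedSpace ℝ F] [NormedAddCommGroup G] [NormedSpace ℝ G]
  [NormedAddCommGroup H] [NormedSpace ℝ H]

theorem lineDerivOp_comm (v w : E) (f : 𝓢(E, F)) :
    (∂_{v} (∂_{w} f) : 𝓢(E, F)) = ∂_{w} (∂_{v} f) := by
  ext x
  have h (v w : E) : ∂_{v} (∂_{w} f) x = fderiv ℝ (fderiv ℝ f) x v w := by
    rw [SchwartzMap.lineDerivOp_apply_eq_fderiv]
    have : ⇑(∂_{w} f : 𝓢(E, F)) = fun y ↦ fderiv ℝ f y w := by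
      ext y
      exact SchwartzMap.lineDerivOp_apply_eq_fderiv w f y
    rw [this, fderiv_clm_apply
      ((f.smooth 2).fderiv_right (m := 1) le_rfl |>.differentiable one_ne_zero x)
      (differentiableAt_const w)]
    simp
  rw [h, h]
  exact ((f.smooth 2).contDiffAt.isSymmSndFDerivAt (by simp)).eq v w

instance (e : ι → E) : LeftCommutative fun i (f : 𝓢(E, F)) ↦ (∂_{e i} f : 𝓢(E, F)) :=
  ⟨fun i j ↦ lineDerivOp_comm (e i) (e j)⟩

/-- The mixed partial derivative of a Schwartz function along the directions `e i`, `i ∈ s`.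
A multi-index is encoded as the multiset `s` of its directions, so that the binomial coefficients
in the Leibniz rule become multiplicities in `Multiset.antidiagonal s`. -/
noncomputable def mixedDeriv (e : ι → E) (s : Multiset ι) (f : 𝓢(E, F)) : 𝓢(E, F) :=
  s.foldr (fun i u ↦ ∂_{e i} u) f

variable (e : ι → E)

@[simp]
theorem mixedDeriv_zero (f : 𝓢(E, F)) : mixedDeriv e 0 f = f := rfl

@[simp]
theorem mixedDeriv_cons (i : ι) (s : Multiset ι) (f : 𝓢(E, F)) :
    mixedDeriv e (i ::ₘ s) f = ∂_{e i} (mixedDeriv e s f) :=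
  Multiset.foldr_cons _ _ _ _

theorem mixedDeriv_add (s t : Multiset ι) (f : 𝓢(E, F)) :
    mixedDeriv e (s + t) f = mixedDeriv e s (mixedDeriv e t f) :=
  Multiset.foldr_add _ _ _ _

theorem mixedDeriv_cons' (i : ι) (s : Multiset ι) (f : 𝓢(E, F)) :
    mixedDeriv e (i ::ₘ s) f = mixedDeriv e s (∂_{e i} f) := by
  rw [← Multiset.singleton_add, add_comm, mixedDeriv_add]
  rfl

theorem lineDerivOp_pairing (B : F →L[ℝ] G →L[ℝ] H) (v : E) (f : 𝓢(E, F)) (g : 𝓢(E, G)) :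
    (∂_{v} (SchwartzMap.pairing B f g) : 𝓢(E, H)) =
      SchwartzMap.pairing B f (∂_{v} g) + SchwartzMap.pairing B (∂_{v} f) g := by
  ext x
  simp only [SchwartzMap.lineDerivOp_apply_eq_fderiv, SchwartzMap.pairing_apply,
    add_apply]
  rw [B.fderiv_of_bilinear f.differentiableAt g.differentiableAt]
  simp

theorem mixedDeriv_pairing (B : F →L[ℝ] G →L[ℝ] H) (s : Multiset ι) (f : 𝓢(E, F))
    (g : 𝓢(E, G)) :
    mixedDeriv e s (SchwartzMap.pairing B f g) = (s.antidiagonal.map fun t ↦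
      SchwartzMap.pairing B (mixedDeriv e t.1 f) (mixedDeriv e t.2 g)).sum := by
  induction s using Multiset.induction with
  | empty => simp
  | cons i s ih =>
    rw [mixedDeriv_cons, ih, ← LineDeriv.lineDerivOpCLM_apply (R := ℝ),
      map_multiset_sum]
    simp [Function.comp_def, lineDerivOp_pairing]

end MixedDeriv

theorem exists_antidiagonal_eq_cons {ι : Type*} (s : Multiset ι) :
    ∃ T, s.antidiagonal = (s, 0) ::ₘ T ∧ ∀ t ∈ T, t.2 ≠ 0 := by
  induction s using Multiset.induction with
  | empty => exact ⟨0, by simp⟩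
  | cons i s ih =>
    obtain ⟨T, hT, hT0⟩ := ih
    refine ⟨s.antidiagonal.map (Prod.map id (i ::ₘ ·)) + T.map (Prod.map (i ::ₘ ·) id), ?_, ?_⟩
    · nth_rw 1 [Multiset.antidiagonal_cons]
      rw [hT, Multiset.map_cons (Prod.map (i ::ₘ ·) id), Multiset.add_cons]
      rfl
    · simp only [Multiset.mem_add, Multiset.mem_map]
      rintro _ (⟨t, -, rfl⟩ | ⟨t, ht, rfl⟩)
      · exact Multiset.cons_ne_zero
      · exact hT0 t ht

section MixedDerivSup

variable {E F ι : Type*} [NormedAddCommGroup E] [NormedSpace ℝ E] [MeasurableSpace E]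
  [NormedAddCommGroup F] [NormedSpace ℝ F]

/-- The supremum of the `L^p` norms of the mixed partial derivatives of order `j`. -/
noncomputable def mixedDerivSup (e : ι → E) (j : ℕ) (p : ℝ≥0∞) (μ : Measure E) (f : 𝓢(E, F)) : ℝ :=
  ⨆ s : Sym ι j, lpNorm (mixedDeriv e s f) p μ

variable {e : ι → E} {j : ℕ} {p : ℝ≥0∞} {μ : Measure E}

theorem mixedDerivSup_nonneg (f : 𝓢(E, F)) : 0 ≤ mixedDerivSup e j p μ f :=
  Real.iSup_nonneg fun _ ↦ lpNorm_nonneg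

theorem lpNorm_mixedDeriv_le_mixedDerivSup [Finite ι] {s : Multiset ι} (hs : s.card = j)
    (f : 𝓢(E, F)) : lpNorm (mixedDeriv e s f) p μ ≤ mixedDerivSup e j p μ f :=
  have : Fintype ι := Fintype.ofFinite ι
  le_ciSup (f := fun s : Sym ι j ↦ lpNorm (mixedDeriv e s f) p μ) (Set.finite_range _).bddAbove
    ⟨s, hs⟩

theorem mixedDerivSup_le {f : 𝓢(E, F)} {B : ℝ} (hB : 0 ≤ B)
    (h : ∀ s : Multiset ι, s.card = j → lpNorm (mixedDeriv e s f) p μ ≤ B) :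
    mixedDerivSup e j p μ f ≤ B :=
  Real.iSup_le (fun s ↦ h s s.2) hB

theorem mixedDerivSup_zero (f : 𝓢(E, F)) : mixedDerivSup e 0 p μ f = lpNorm f p μ :=
  ciSup_unique

theorem mixedDerivSup_lineDerivOp_le [Finite ι] (i : ι) (f : 𝓢(E, F)) :
    mixedDerivSup e j p μ (∂_{e i} f) ≤ mixedDerivSup e (j + 1) p μ f :=
  mixedDerivSup_le (mixedDerivSup_nonneg f) fun s hs ↦
    (congrArg (lpNorm · p μ) (congrArg _ (mixedDeriv_cons' e i s f))).symm.trans_le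
      (lpNorm_mixedDeriv_le_mixedDerivSup (by simp [hs]) f)

end MixedDerivSup

theorem lpNorm_multisetSum_le_card_mul {E F : Type*} [NormedAddCommGroup E] [NormedSpace ℝ E]
    [MeasurableSpace E] [BorelSpace E] [SecondCountableTopology E]
    [NormedAddCommGroup F] [NormedSpace ℝ F] {μ : Measure E} [μ.HasTemperateGrowth] {p : ℝ≥0∞}
    (hp : 1 ≤ p) (T : Multiset 𝓢(E, F)) {B : ℝ} (hB : ∀ u ∈ T, lpNorm u p μ ≤ B) :
    lpNorm T.sum p μ ≤ T.card * B := by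
  calc lpNorm T.sum p μ ≤ (T.map fun u : 𝓢(E, F) ↦ lpNorm u p μ).sum :=
        Multiset.le_sum_of_subadditive (fun u : 𝓢(E, F) ↦ lpNorm u p μ)
          (by simp) (fun u _ ↦ lpNorm_add_le (u.memLp p μ) hp) T
    _ ≤ (T.map fun u : 𝓢(E, F) ↦ lpNorm u p μ).card • B :=
        Multiset.sum_le_card_nsmul _ _ (by simpa using hB)
    _ = T.card * B := by rw [Multiset.card_map, nsmul_eq_mul]

section Moser

variable {E ι : Type*} [NormedAddCommGroup E] [NormedSpace ℝ E] [FiniteDimensional ℝ E]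
  [MeasurableSpace E] [BorelSpace E] {μ : Measure E} [μ.IsAddHaarMeasure] [Finite ι] {e : ι → E}

theorem lpNorm_lineDerivOp_two_mul_div_sq_le {n j : ℕ} (hj : j + 2 ≤ n) (v : 𝓢(E, ℝ)) (w : E) :
    lpNorm (∂_{w} v : 𝓢(E, ℝ)) (2 * n / (j + 1 : ℕ)) μ ^ 2 ≤ 2 * n * (lpNorm v (2 * n / j) μ *
      lpNorm (∂_{w} (∂_{w} v) : 𝓢(E, ℝ)) (2 * n / (j + 2 : ℕ)) μ) := by
  have hj0 : ((j + 1 : ℕ) : ℝ≥0∞) ≠ 0 := by simp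
  have h2p : (2 : ℝ≥0∞) < 2 * n / (j + 1 : ℕ) := by
    rw [ENNReal.lt_div_iff_mul_lt (.inl hj0) (.inl (ENNReal.natCast_ne_top _))]
    exact_mod_cast (by lia : 2 * (j + 1) < 2 * n)
  have hpn : (2 * n / (j + 1 : ℕ) : ℝ≥0∞).toReal ≤ 2 * n := by
    rw [ENNReal.toReal_div, ENNReal.toReal_natCast]
    simpa using div_le_self (by positivity : (0 : ℝ) ≤ 2 * n) (by simp : (1 : ℝ) ≤ (j + 1 : ℕ))
  have : ENNReal.HolderTriple (2 * n / j) (2 * n / (j + 2 : ℕ)) (2 * n / (j + 1 : ℕ) / 2) := by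
    have hsum : (j + (j + 2 : ℕ) : ℝ≥0∞) = (j + 1 : ℕ) * 2 := by push_cast; ring
    have hdiv : (2 * n / (j + 1 : ℕ) / 2 : ℝ≥0∞) = 2 * n / (j + (j + 2 : ℕ)) := by
      simp only [hsum, div_eq_mul_inv, ENNReal.mul_inv (.inl hj0) (.inr two_ne_zero), mul_assoc]
    exact hdiv ▸ holderTriple_div (by simp; lia) (by finiteness)
  refine (lpNorm_lineDerivOp_sq_le (q := 2 * n / j) (r := 2 * n / (j + 2 : ℕ)) v w h2p
    (ENNReal.div_ne_top (by finiteness) hj0)).trans ?_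
  gcongr
  · exact mul_nonneg lpNorm_nonneg lpNorm_nonneg
  · linarith

theorem mixedDerivSup_succ_sq_le {n j : ℕ} (hj : j + 2 ≤ n) (f : 𝓢(E, ℝ)) :
    mixedDerivSup e (j + 1) (2 * n / (j + 1 : ℕ)) μ f ^ 2 ≤ 2 * n *
      (mixedDerivSup e j (2 * n / j) μ f * mixedDerivSup e (j + 2) (2 * n / (j + 2 : ℕ)) μ f) := by
  set B := 2 * n *
    (mixedDerivSup e j (2 * n / j) μ f * mixedDerivSup e (j + 2) (2 * n / (j + 2 : ℕ)) μ f) with hB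
  have hB0 : 0 ≤ B :=
    mul_nonneg (by positivity) (mul_nonneg (mixedDerivSup_nonneg f) (mixedDerivSup_nonneg f))
  refine (Real.le_sqrt (mixedDerivSup_nonneg f) hB0).1 <|
    mixedDerivSup_le (Real.sqrt_nonneg _) fun s hs ↦ Real.le_sqrt_of_sq_le ?_
  obtain ⟨i, t, rfl, ht⟩ := Multiset.card_eq_succ_iff.1 hs
  rw [mixedDeriv_cons]
  refine (lpNorm_lineDerivOp_two_mul_div_sq_le hj _ _).trans ?_
  rw [hB, ← mixedDeriv_cons, ← mixedDeriv_cons]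
  gcongr
  · exact lpNorm_nonneg
  · exact mixedDerivSup_nonneg f
  · exact lpNorm_mixedDeriv_le_mixedDerivSup ht f
  · exact lpNorm_mixedDeriv_le_mixedDerivSup (by simp [ht]) f

theorem lpNorm_mixedDeriv_smul_mixedDeriv_le {n : ℕ} {s t : Multiset ι} (hst : s.card + t.card = n)
    (f g : 𝓢(E, ℝ)) :
    lpNorm (⇑(mixedDeriv e s f) • ⇑(mixedDeriv e t g)) 2 μ ≤
      (2 * n) ^ n ^ 2 * (lpNorm f ∞ μ * mixedDerivSup e n 2 μ g +
        mixedDerivSup e n 2 μ f * lpNorm g ∞ μ) := by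
  rcases eq_or_ne n 0 with rfl | hn
  · obtain ⟨rfl, rfl⟩ : s = 0 ∧ t = 0 := by simpa using hst
    have h := lpNorm_smul_le (r := 2) (f.memLp ∞ μ) (g.memLp 2 μ)
    simpa [mixedDerivSup_zero] using h.trans (le_add_of_nonneg_right
      (mul_nonneg (lpNorm_nonneg (f := f)) (lpNorm_nonneg (f := g))))
  have h2n : (2 * n : ℝ≥0∞) ≠ 0 := by simpa
  have htwo : (2 * n / n : ℝ≥0∞) = 2 := ENNReal.mul_div_cancel_right (by simpa) (by simp)
  have hholder : ENNReal.HolderTriple (2 * n / s.card) (2 * n / t.card) 2 := by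
    simpa only [← Nat.cast_add, hst, htwo] using
      holderTriple_div (b := s.card) (c := t.card) h2n (by finiteness)
  let a (u : 𝓢(E, ℝ)) (j : ℕ) : ℝ := mixedDerivSup e j (2 * n / j) μ u
  have ha (u : 𝓢(E, ℝ)) (j : ℕ) : 0 ≤ a u j := mixedDerivSup_nonneg u
  have ha_zero (u : 𝓢(E, ℝ)) : a u 0 = lpNorm u ∞ μ := by
    simp only [a, mixedDerivSup_zero, Nat.cast_zero, ENNReal.div_zero h2n]
  have ha_self (u : 𝓢(E, ℝ)) : a u n = mixedDerivSup e n 2 μ u := by simp only [a, htwo]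
  calc lpNorm (⇑(mixedDeriv e s f) • ⇑(mixedDeriv e t g)) 2 μ
      ≤ lpNorm (mixedDeriv e s f) (2 * n / s.card) μ *
        lpNorm (mixedDeriv e t g) (2 * n / t.card) μ :=
        lpNorm_smul_le (SchwartzMap.memLp _ _ _) (SchwartzMap.memLp _ _ _)
    _ ≤ a f s.card * a g t.card :=
        mul_le_mul (lpNorm_mixedDeriv_le_mixedDerivSup rfl f)
          (lpNorm_mixedDeriv_le_mixedDerivSup rfl g) lpNorm_nonneg (ha f _)
    _ ≤ (2 * n) ^ n ^ 2 * (a f 0 * a g n + a f n * a g 0) :=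
        mul_le_of_sq_le_mul (by exact_mod_cast (by lia : 1 ≤ 2 * n)) (ha f) (ha g)
          (fun _ hj ↦ mixedDerivSup_succ_sq_le hj f) (fun _ hj ↦ mixedDerivSup_succ_sq_le hj g) hst
    _ = _ := by rw [ha_zero, ha_zero, ha_self, ha_self]

theorem lpNorm_mixedDeriv_smul_mixedDeriv_le_of_ne_zero {n : ℕ} {s t : Multiset ι}
    (hst : s.card + t.card = n + 1) (ht : t ≠ 0) (f g : 𝓢(E, ℝ)) :
    lpNorm (⇑(mixedDeriv e s f) • ⇑(mixedDeriv e t g)) 2 μ ≤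
      (2 * n) ^ n ^ 2 * (lpNorm f ∞ μ * mixedDerivSup e (n + 1) 2 μ g +
        mixedDerivSup e n 2 μ f * mixedDerivSup e 1 ∞ μ g) := by
  obtain ⟨i, hi⟩ := Multiset.exists_mem_of_ne_zero ht
  obtain ⟨t, rfl⟩ := Multiset.exists_cons_of_mem hi
  rw [Multiset.card_cons, ← add_assoc, Nat.add_right_cancel_iff] at hst
  rw [mixedDeriv_cons']
  refine (lpNorm_mixedDeriv_smul_mixedDeriv_le hst f _).trans ?_
  gcongr
  · exact lpNorm_nonneg
  · exact mixedDerivSup_lineDerivOp_le i g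
  · exact mixedDerivSup_nonneg f
  · exact lpNorm_mixedDeriv_le_mixedDerivSup (Multiset.card_singleton i) g

theorem lpNorm_mixedDeriv_pairing_sub_le {n : ℕ} {s : Multiset ι} (hs : s.card = n + 1)
    (f g : 𝓢(E, ℝ)) :
    lpNorm (mixedDeriv e s (SchwartzMap.pairing (.mul ℝ ℝ) f g) -
        SchwartzMap.pairing (.mul ℝ ℝ) (mixedDeriv e s f) g : 𝓢(E, ℝ)) 2 μ ≤
      2 ^ (n + 1) * ((2 * n) ^ n ^ 2 * (lpNorm f ∞ μ * mixedDerivSup e (n + 1) 2 μ g +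
        mixedDerivSup e n 2 μ f * mixedDerivSup e 1 ∞ μ g)) := by
  obtain ⟨T, hT, hT0⟩ := exists_antidiagonal_eq_cons s
  have hcard : T.card ≤ 2 ^ (n + 1) := by
    rw [← hs, ← Multiset.card_antidiagonal, hT]
    simp
  have hsum (t : Multiset ι × Multiset ι) (ht : t ∈ T) : t.1.card + t.2.card = n + 1 := by
    have hts : t.1 + t.2 = s := Multiset.mem_antidiagonal.1 (hT ▸ Multiset.mem_cons_of_mem ht)
    rw [← hs, ← hts, Multiset.card_add]
  rw [mixedDeriv_pairing, hT, Multiset.map_cons, Multiset.sum_cons, mixedDeriv_zero,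
    add_sub_cancel_left]
  refine (lpNorm_multisetSum_le_card_mul one_le_two _ <| Multiset.forall_mem_map_iff.2
    fun t ht ↦ lpNorm_mixedDeriv_smul_mixedDeriv_le_of_ne_zero (hsum t ht) (hT0 t ht) f g).trans ?_
  rw [Multiset.card_map]
  gcongr
  · exact mul_nonneg (by positivity) <| add_nonneg
      (mul_nonneg lpNorm_nonneg (mixedDerivSup_nonneg g))
      (mul_nonneg (mixedDerivSup_nonneg f) (mixedDerivSup_nonneg g))
  · exact_mod_cast hcard

end Moser

section IteratedFDeriv

variable {E F ι : Type*} [NormedAddCommGroup E] [NormedSpace ℝ E]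
  [NormedAddCommGroup F] [NormedSpace ℝ F]

theorem mixedDeriv_ofFn (e : ι → E) {n : ℕ} (m : Fin n → ι) (f : 𝓢(E, F)) :
    mixedDeriv e (List.ofFn m) f = ∂^{e ∘ m} f := by
  induction n with
  | zero => rfl
  | succ n ih =>
    rw [List.ofFn_succ, ← Multiset.cons_coe, mixedDeriv_cons, ih,
      LineDeriv.iteratedLineDerivOp_succ_left]
    rfl

theorem norm_mixedDeriv_apply_le {e : ι → E} (he : ∀ i, ‖e i‖ ≤ 1) (s : Multiset ι) (f : 𝓢(E, F))
    (x : E) : ‖mixedDeriv e s f x‖ ≤ ‖iteratedFDeriv ℝ s.card f x‖ := by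
  have h {n : ℕ} (m : Fin n → ι) :
      ‖mixedDeriv e (List.ofFn m) f x‖ ≤ ‖iteratedFDeriv ℝ n f x‖ := by
    rw [mixedDeriv_ofFn, SchwartzMap.iteratedLineDerivOp_eq_iteratedFDeriv]
    exact ContinuousMultilinearMap.unit_le_opNorm _
      ((pi_norm_le_iff_of_nonneg zero_le_one).2 fun i ↦ he (m i))
  obtain ⟨l, rfl⟩ : ∃ l : List ι, ↑l = s := Quot.exists_rep s
  have hl := h l.get
  rwa [List.ofFn_get] at hl

theorem integrable_norm_iteratedFDeriv_sq [MeasurableSpace E] [BorelSpace E]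
    [SecondCountableTopology E] {μ : Measure E} [μ.HasTemperateGrowth] (f : 𝓢(E, F)) (k : ℕ) :
    Integrable (fun x ↦ ‖iteratedFDeriv ℝ k f x‖ ^ 2) μ := by
  obtain ⟨C, -, hC⟩ := f.decay 0 k
  have h := f.integrable_pow_mul_iteratedFDeriv μ 0 k
  simp only [pow_zero, one_mul] at h hC
  simp only [sq]
  exact h.mul_bdd (c := C) h.1 (ae_of_all _ fun x ↦ by simpa using hC x)

end IteratedFDeriv

theorem l2_eq_lpNorm {f : (Fin 3 → ℝ) → ℝ} (hf : AEStronglyMeasurable f volume) :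
    l2 f = lpNorm f 2 volume := by
  rw [lpNorm_eq_integral_norm_rpow_toReal two_ne_zero ENNReal.ofNat_ne_top hf, l2,
    Real.sqrt_eq_rpow]
  simp

theorem linf_eq_lpNorm {f : (Fin 3 → ℝ) → ℝ} (hf : AEStronglyMeasurable f volume) :
    linf f = lpNorm f ∞ volume :=
  toReal_eLpNorm hf

theorem sob_nonneg (m : ℕ) (f : (Fin 3 → ℝ) → ℝ) : 0 ≤ sob m f := Real.sqrt_nonneg _

theorem sob_mono (f : (Fin 3 → ℝ) → ℝ) : Monotone (sob · f) := fun _ _ h ↦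
  Real.sqrt_le_sqrt <| Finset.sum_le_sum_of_subset_of_nonneg (by gcongr)
    fun _ _ _ ↦ integral_nonneg fun _ ↦ by positivity

theorem coe_lineDerivOp_basisFun (i : Fin 3) (f : 𝓢(Fin 3 → ℝ, ℝ)) :
    ⇑(∂_{Pi.basisFun ℝ (Fin 3) i} f : 𝓢(Fin 3 → ℝ, ℝ)) = pd i f := by
  ext x
  rw [SchwartzMap.lineDerivOp_apply_eq_fderiv, Pi.basisFun_apply, pd]

theorem coe_mixedDeriv_replicate (n : ℕ) (i : Fin 3) (f : 𝓢(Fin 3 → ℝ, ℝ)) :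
    ⇑(mixedDeriv (Pi.basisFun ℝ (Fin 3)) (.replicate n i) f) = (pd i)^[n] f := by
  induction n with
  | zero => rfl
  | succ n ih =>
    rw [Multiset.replicate_succ, mixedDeriv_cons, coe_lineDerivOp_basisFun, ih,
      Function.iterate_succ_apply']

theorem Dmulti_coe (a b c : ℕ) (f : 𝓢(Fin 3 → ℝ, ℝ)) :
    Dmulti a b c f = mixedDeriv (Pi.basisFun ℝ (Fin 3))
      (.replicate a 0 + (.replicate b 1 + .replicate c 2)) f := by
  simp only [mixedDeriv_add, coe_mixedDeriv_replicate, Dmulti]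

theorem norm_basisFun_le_one (i : Fin 3) : ‖Pi.basisFun ℝ (Fin 3) i‖ ≤ 1 := by
  rw [Pi.basisFun_apply, Pi.norm_single, norm_one]

theorem mixedDerivSup_le_sob (n : ℕ) (f : 𝓢(Fin 3 → ℝ, ℝ)) :
    mixedDerivSup (Pi.basisFun ℝ (Fin 3)) n 2 volume f ≤ sob n f := by
  refine mixedDerivSup_le (sob_nonneg n f) fun s hs ↦ ?_
  subst hs
  rw [← l2_eq_lpNorm (mixedDeriv _ s f).continuous.aestronglyMeasurable]
  refine Real.sqrt_le_sqrt ?_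
  calc ∫ x, mixedDeriv (Pi.basisFun ℝ (Fin 3)) s f x ^ 2
      ≤ ∫ x, ‖iteratedFDeriv ℝ s.card f x‖ ^ 2 := by
        refine integral_mono_of_nonneg (ae_of_all _ fun x ↦ sq_nonneg _)
          (integrable_norm_iteratedFDeriv_sq f _) (ae_of_all _ fun x ↦ ?_)
        simpa using pow_le_pow_left₀ (norm_nonneg _)
          (norm_mixedDeriv_apply_le norm_basisFun_le_one s f x) 2
    _ ≤ sobSq s.card f :=
        Finset.single_le_sum (f := fun k ↦ ∫ x, ‖iteratedFDeriv ℝ k f x‖ ^ 2)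
          (fun k _ ↦ integral_nonneg fun x ↦ by positivity) (Finset.self_mem_range_succ _)

theorem mixedDerivSup_one_top_le_gradLinf (g : 𝓢(Fin 3 → ℝ, ℝ)) :
    mixedDerivSup (Pi.basisFun ℝ (Fin 3)) 1 ∞ volume g ≤ gradLinf g := by
  have hmem : MemLp (fun x ↦ ‖fderiv ℝ g x‖) ∞ volume :=
    ((SchwartzMap.fderivCLM ℝ (Fin 3 → ℝ) ℝ g).memLp ∞ volume).norm
  refine mixedDerivSup_le ENNReal.toReal_nonneg fun s hs ↦ ?_
  rw [gradLinf, toReal_eLpNorm hmem.1]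
  refine lpNorm_mono_real hmem fun x ↦ ?_
  rw [← norm_iteratedFDeriv_one, ← hs]
  exact norm_mixedDeriv_apply_le norm_basisFun_le_one s g x

theorem lpNorm_mixedDeriv_pairing_sub_le_sob {M : ℕ} {s : Multiset (Fin 3)} (hs : s.card ≤ M + 1)
    (f g : 𝓢(Fin 3 → ℝ, ℝ)) :
    lpNorm (mixedDeriv (Pi.basisFun ℝ (Fin 3)) s (SchwartzMap.pairing (.mul ℝ ℝ) f g) -
        SchwartzMap.pairing (.mul ℝ ℝ) (mixedDeriv (Pi.basisFun ℝ (Fin 3)) s f) g :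
        𝓢(Fin 3 → ℝ, ℝ)) 2 volume ≤
      2 ^ (M + 1) * (2 * M + 1) ^ M ^ 2 * (sob M f * gradLinf g + linf f * sob (M + 1) g) := by
  have hf_linf : 0 ≤ linf f := ENNReal.toReal_nonneg
  have hf_sob : 0 ≤ sob M f := sob_nonneg M f
  rw [mul_assoc, add_comm (sob M f * _)]
  rcases hn : s.card with _ | n
  · have hg_sob : 0 ≤ sob (M + 1) g := sob_nonneg _ g
    have hg_grad : 0 ≤ gradLinf g := ENNReal.toReal_nonneg
    rw [Multiset.card_eq_zero.1 hn, mixedDeriv_zero, mixedDeriv_zero, sub_self]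
    simp only [FunLike.coe_zero, lpNorm_zero]
    positivity
  have hnM : n ≤ M := by lia
  have hpow : (2 * n : ℝ) ^ n ^ 2 ≤ (2 * M + 1) ^ M ^ 2 := by
    have hbase : (2 * n : ℝ) ≤ 2 * M + 1 := by exact_mod_cast (by lia : 2 * n ≤ 2 * M + 1)
    calc (2 * n : ℝ) ^ n ^ 2 ≤ (2 * M + 1) ^ n ^ 2 := by gcongr
      _ ≤ (2 * M + 1) ^ M ^ 2 := by gcongr; linarith
  have hg_sup : 0 ≤ mixedDerivSup (Pi.basisFun ℝ (Fin 3)) 1 ∞ volume g := mixedDerivSup_nonneg g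
  have hg_sup' : 0 ≤ mixedDerivSup (Pi.basisFun ℝ (Fin 3)) (n + 1) 2 volume g :=
    mixedDerivSup_nonneg g
  have hf_sup : 0 ≤ mixedDerivSup (Pi.basisFun ℝ (Fin 3)) n 2 volume f := mixedDerivSup_nonneg f
  refine (lpNorm_mixedDeriv_pairing_sub_le hn f g).trans ?_
  rw [← linf_eq_lpNorm f.continuous.aestronglyMeasurable]
  gcongr
  · exact one_le_two
  · exact (mixedDerivSup_le_sob _ g).trans (sob_mono g (by lia))
  · exact (mixedDerivSup_le_sob _ f).trans (sob_mono f hnM)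
  · exact mixedDerivSup_one_top_le_gradLinf g

theorem commutator_estimate_general (M : ℕ) :
    ∃ C > 0, ∀ f g : SchwartzMap (Fin 3 → ℝ) ℝ,
      ∑ p ∈ idxSet (M + 1),
        l2 (fun x => Dmulti p.1 p.2.1 p.2.2 (fun y => f y * g y) x
          - Dmulti p.1 p.2.1 p.2.2 (fun y => f y) x * g x)
      ≤ C * (sob M (fun y => f y) * gradLinf (fun y => g y)
          + linf (fun y => f y) * sob (M + 1) (fun y => g y)) := by
  have hcard : 0 < (idxSet (M + 1)).card := Finset.card_pos.2 ⟨0, by simp [idxSet]⟩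
  refine ⟨(idxSet (M + 1)).card * (2 ^ (M + 1) * (2 * M + 1) ^ M ^ 2), by positivity,
    fun f g ↦ ?_⟩
  rw [mul_assoc, ← nsmul_eq_mul]
  refine Finset.sum_le_card_nsmul _ _ _ fun p hp ↦ ?_
  set s : Multiset (Fin 3) := .replicate p.1 0 + (.replicate p.2.1 1 + .replicate p.2.2 2)
  have hs : s.card ≤ M + 1 := by simpa [s, add_assoc] using (Finset.mem_filter.1 hp).2
  refine Eq.trans_le ?_ (lpNorm_mixedDeriv_pairing_sub_le_sob hs f g)
  rw [← l2_eq_lpNorm (SchwartzMap.continuous _).aestronglyMeasurable]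
  congr 1 with x
  have hmul : (fun y ↦ f y * g y) = SchwartzMap.pairing (.mul ℝ ℝ) f g := rfl
  rw [Dmulti_coe, hmul, Dmulti_coe]
  rfl

/-- Kato–Ponce type commutator (Moser) estimate: for each integer `m ≥ 3` there is `C` with
`Σ_{|α|≤m} ‖D^α(fg) − (D^α f) g‖_{L²} ≤ C (‖f‖_{H^{m−1}} ‖∇g‖_{L^∞} + ‖f‖_{L^∞} ‖g‖_{H^m})`. -/
theorem commutator_estimate (m : ℕ) (hm : 3 ≤ m) :
    ∃ C > 0, ∀ f g : SchwartzMap (Fin 3 → ℝ) ℝ,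
      ∑ p ∈ idxSet m,
        l2 (fun x => Dmulti p.1 p.2.1 p.2.2 (fun y => f y * g y) x
          - Dmulti p.1 p.2.1 p.2.2 (fun y => f y) x * g x)
      ≤ C * (sob (m - 1) (fun y => f y) * gradLinf (fun y => g y)
          + linf (fun y => f y) * sob m (fun y => g y)) := by
  obtain ⟨M, rfl⟩ := Nat.exists_eq_add_of_le' (show 1 ≤ m by lia)
  exact commutator_estimate_general M
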